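/- arXiv:1103.5960 — 7 statements merged into one kernel-verified Lean document; each statement's English description precedes it below -/
import Mathlib

section
/- Let E, F, G be real constants with F² + E·G > 0 and Q(u,v) = -E·u² + 2·F·u·v + G·v². Suppose E ≤ 0. Then for every C¹ curve c : [0,1] → ℝ² with Q(c'(t)) < 0 for all t ∈ [0,1], the second component t ↦ (c(t)).2 is strictly monotone on [0,1]; in particular there is no integer n with c(1) - c(0) = (n, 0). (Hence if ∂x is lightlike, i.e. E = 0, the flat Lorentzian cylinder is chronological: it admits no closed timelike curve.) -/
/-- The quadratic form of the flat Lorentzian metric `g = -E dx² + 2F dx dy + G dy²`. -/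
def Qform (E F G : ℝ) (p : ℝ × ℝ) : ℝ :=
  -E * p.1 ^ 2 + 2 * F * p.1 * p.2 + G * p.2 ^ 2

/-- When `∂x` is not timelike, timelike vectors are transverse to it. -/
theorem snd_ne_zero_of_Qform_neg {E F G : ℝ} (hE : E ≤ 0) {p : ℝ × ℝ}
    (hp : Qform E F G p < 0) : p.2 ≠ 0 := by
  intro h
  simp only [Qform, h] at hp
  nlinarith [mul_nonneg (neg_nonneg.2 hE) (sq_nonneg p.1)]

/-- If `E ≤ 0` (the fundamental field `∂x` is non-timelike), then along every timelike
C¹ curve the second coordinate is strictly monotone; in particular the curve cannot be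
closed on the cylinder. -/
theorem stmt_2 (E F G : ℝ) (hLor : F ^ 2 + E * G > 0) (hE : E ≤ 0)
    (c c' : ℝ → ℝ × ℝ)
    (hderiv : ∀ t ∈ Set.Icc (0 : ℝ) 1, HasDerivAt c (c' t) t)
    (hcont : ContinuousOn c' (Set.Icc (0 : ℝ) 1))
    (htime : ∀ t ∈ Set.Icc (0 : ℝ) 1, Qform E F G (c' t) < 0) :
    (StrictMonoOn (fun t => (c t).2) (Set.Icc (0 : ℝ) 1) ∨
      StrictAntiOn (fun t => (c t).2) (Set.Icc (0 : ℝ) 1)) ∧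
    ¬ ∃ n : ℤ, c 1 - c 0 = ((n : ℝ), 0) := by
  have hy : ∀ t ∈ Set.Icc (0 : ℝ) 1, HasDerivAt (fun s => (c s).2) (c' t).2 t := fun t ht =>
    (ContinuousLinearMap.snd ℝ ℝ ℝ).hasFDerivAt.comp_hasDerivAt t (hderiv t ht)
  have hyc : ContinuousOn (fun t => (c t).2) (Set.Icc (0 : ℝ) 1) := fun t ht =>
    (hy t ht).continuousAt.continuousWithinAt
  have hmono : StrictMonoOn (fun t => (c t).2) (Set.Icc (0 : ℝ) 1) ∨
      StrictAntiOn (fun t => (c t).2) (Set.Icc (0 : ℝ) 1) := by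
    rcases hasDerivWithinAt_forall_lt_or_forall_gt_of_forall_ne (convex_Icc (0 : ℝ) 1)
      (fun t ht => (hy t ht).hasDerivWithinAt)
      (fun t ht => snd_ne_zero_of_Qform_neg hE (htime t ht)) with h | h
    · exact Or.inr <| strictAntiOn_of_hasDerivWithinAt_neg (convex_Icc 0 1) hyc
        (fun t ht => (hy t (interior_subset ht)).hasDerivWithinAt)
        (fun t ht => h t (interior_subset ht))
    · exact Or.inl <| strictMonoOn_of_hasDerivWithinAt_pos (convex_Icc 0 1) hyc
        (fun t ht => (hy t (interior_subset ht)).hasDerivWithinAt)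
        (fun t ht => h t (interior_subset ht))
  refine ⟨hmono, ?_⟩
  rintro ⟨n, hn⟩
  have hclosed : (c 1).2 - (c 0).2 = 0 := congrArg Prod.snd hn
  have h0 : (0 : ℝ) ∈ Set.Icc (0 : ℝ) 1 := by simp
  have h1 : (1 : ℝ) ∈ Set.Icc (0 : ℝ) 1 := by simp
  rcases hmono with h | h
  · exact (sub_pos.2 (h h0 h1 one_pos)).ne' hclosed
  · exact (sub_neg.2 (h h0 h1 one_pos)).ne hclosed
end

section
/- Let E, F, G be real constants with F² + E·G > 0 and Q(u,v) = -E·u² + 2·F·u·v + G·v². Suppose there exists a C¹ curve c : [0,1] → ℝ² with nowhere-vanishing derivative such that Q(c'(t)) ≤ 0 for all t ∈ [0,1] and c(1) - c(0) = (n,0) for some integer n. Then E ≥ 0. (This is the key step in the implication 'non-causal ⇒ ∂x is non-spacelike': a closed causal curve on the cylinder must have a point where its y-velocity vanishes, and there its tangent is a nonzero multiple of ∂x, forcing -E·(x'(t₀))² ≤ 0.) -/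
/-- If the flat Lorentzian cylinder admits a closed causal curve (a C¹ curve with
nowhere-vanishing derivative, everywhere non-spacelike tangent, closed on the cylinder),
then the fundamental field `∂x` is non-spacelike, i.e. `E ≥ 0`. -/
theorem stmt_4 (E F G : ℝ) (hLor : F ^ 2 + E * G > 0)
    (c c' : ℝ → ℝ × ℝ)
    (hderiv : ∀ t ∈ Set.Icc (0 : ℝ) 1, HasDerivAt c (c' t) t)
    (hcont : ContinuousOn c' (Set.Icc (0 : ℝ) 1))
    (hne : ∀ t ∈ Set.Icc (0 : ℝ) 1, c' t ≠ 0)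
    (hcausal : ∀ t ∈ Set.Icc (0 : ℝ) 1, Qform E F G (c' t) ≤ 0)
    (n : ℤ) (hclosed : c 1 - c 0 = ((n : ℝ), 0)) :
    E ≥ 0 := by
  have hderiv_snd : ∀ t ∈ Set.Icc (0 : ℝ) 1, HasDerivAt (fun s => (c s).2) (c' t).2 t :=
    fun t ht => (hasFDerivAt_snd (𝕜 := ℝ) (p := c t)).comp_hasDerivAt t (hderiv t ht)
  have hends : (c 0).2 = (c 1).2 := by
    have h := congrArg Prod.snd hclosed
    simp only [Prod.snd_sub] at h
    linarith
  obtain ⟨t, ht, hsnd⟩ := exists_hasDerivAt_eq_zero zero_lt_one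
    (fun t ht => (hderiv_snd t ht).continuousAt.continuousWithinAt) hends
    (fun t ht => hderiv_snd t (Set.Ioo_subset_Icc_self ht))
  have ht' := Set.Ioo_subset_Icc_self ht
  have hfst : (c' t).1 ≠ 0 := fun h => hne t ht' (Prod.ext h hsnd)
  have hQ := hcausal t ht'
  simp only [Qform, hsnd] at hQ
  have hpos : 0 < (c' t).1 ^ 2 := by positivity
  exact nonneg_of_mul_nonneg_left (by linarith : 0 ≤ E * (c' t).1 ^ 2) hpos
end

section
/- Let E, F, G be real constants with F² + E·G > 0 and Q(u,v) = -E·u² + 2·F·u·v + G·v². Suppose there exists a C¹ curve c : [0,1] → ℝ² such that Q(c'(t)) < 0 for all t ∈ [0,1] and c(1) - c(0) = (n,0) for some integer n. Then E > 0. (This is Theorem 2, (v) ⇒ (i): if the flat Lorentzian cylinder admits a closed timelike curve, then the fundamental vector field ∂x is timelike.) -/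
/-- Theorem 2, (v) ⇒ (i): if the flat Lorentzian cylinder admits a closed timelike
curve, then the fundamental vector field `∂x` is timelike, i.e. `E > 0`. -/
theorem stmt_5 (E F G : ℝ) (hLor : F ^ 2 + E * G > 0)
    (c c' : ℝ → ℝ × ℝ)
    (hderiv : ∀ t ∈ Set.Icc (0 : ℝ) 1, HasDerivAt c (c' t) t)
    (hcont : ContinuousOn c' (Set.Icc (0 : ℝ) 1))
    (htime : ∀ t ∈ Set.Icc (0 : ℝ) 1, Qform E F G (c' t) < 0)
    (n : ℤ) (hclosed : c 1 - c 0 = ((n : ℝ), 0)) :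
    E > 0 := by
  have hsnd : ∀ t ∈ Set.Icc (0 : ℝ) 1, HasDerivAt (fun s => (c s).2) (c' t).2 t :=
    fun t ht => (hasFDerivAt_snd (𝕜 := ℝ) (p := c t)).comp_hasDerivAt t (hderiv t ht)
  have hends : (c 0).2 = (c 1).2 := by
    have h := congrArg Prod.snd hclosed
    simp only [Prod.snd_sub] at h
    linarith
  obtain ⟨t, ht, hvert⟩ := exists_hasDerivAt_eq_zero zero_lt_one
    (fun s hs => (hsnd s hs).continuousAt.continuousWithinAt) hends
    (fun s hs => hsnd s (Set.Ioo_subset_Icc_self hs))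
  have hneg := htime t (Set.Ioo_subset_Icc_self ht)
  simp only [Qform, hvert] at hneg
  by_contra hE
  nlinarith [mul_nonneg (neg_nonneg.mpr (not_lt.mp hE)) (sq_nonneg (c' t).1)]
end

section
/- Let E, F, G be real constants with F² + E·G > 0 and Q(u,v) = -E·u² + 2·F·u·v + G·v². Suppose E < 0. Then for every C¹ curve c : [0,1] → ℝ² with continuous nowhere-vanishing derivative satisfying Q(c'(t)) ≤ 0 for all t ∈ [0,1], the derivative of the second component, t ↦ (c'(t)).2, never vanishes, hence has constant sign, and t ↦ (c(t)).2 is strictly monotone; in particular there is no integer n with c(1) - c(0) = (n,0). (This is the causality part of Theorem 2, (iv) ⇒ (vi): if ∂x is spacelike, the flat Lorentzian cylinder admits no closed causal curve.) -/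
/-- When `∂x` is spacelike, a nonzero causal vector has nonzero second component. -/
theorem Qform_snd_ne_zero {E F G : ℝ} (hE : E < 0) {p : ℝ × ℝ} (hp : p ≠ 0)
    (hQ : Qform E F G p ≤ 0) : p.2 ≠ 0 := by
  intro h
  have h1 : p.1 ≠ 0 := fun h1 => hp (Prod.ext h1 h)
  have hpos : 0 < -E * p.1 ^ 2 := mul_pos (neg_pos.mpr hE) (by positivity)
  simp only [Qform, h] at hQ
  linarith

/-- Theorem 2, (iv) ⇒ (vi), causality part: if `E < 0` (the fundamental field `∂x` is
spacelike), then along every causal C¹ curve with nowhere-vanishing derivative the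
`y`-velocity never vanishes, hence has constant sign, the second coordinate is strictly
monotone, and the curve cannot be closed on the cylinder. -/
theorem stmt_7 (E F G : ℝ) (hLor : F ^ 2 + E * G > 0) (hE : E < 0)
    (c c' : ℝ → ℝ × ℝ)
    (hderiv : ∀ t ∈ Set.Icc (0 : ℝ) 1, HasDerivAt c (c' t) t)
    (hcont : ContinuousOn c' (Set.Icc (0 : ℝ) 1))
    (hne : ∀ t ∈ Set.Icc (0 : ℝ) 1, c' t ≠ 0)
    (hcausal : ∀ t ∈ Set.Icc (0 : ℝ) 1, Qform E F G (c' t) ≤ 0) :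
    (∀ t ∈ Set.Icc (0 : ℝ) 1, (c' t).2 ≠ 0) ∧
    ((∀ t ∈ Set.Icc (0 : ℝ) 1, (c' t).2 > 0) ∨ (∀ t ∈ Set.Icc (0 : ℝ) 1, (c' t).2 < 0)) ∧
    (StrictMonoOn (fun t => (c t).2) (Set.Icc (0 : ℝ) 1) ∨
      StrictAntiOn (fun t => (c t).2) (Set.Icc (0 : ℝ) 1)) ∧
    ¬ ∃ n : ℤ, c 1 - c 0 = ((n : ℝ), 0) := by
  have hy : ∀ t ∈ Set.Icc (0 : ℝ) 1, HasDerivAt (fun t => (c t).2) (c' t).2 t := fun t ht =>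
    (hasFDerivAt_snd (𝕜 := ℝ) (p := c t)).comp_hasDerivAt t (hderiv t ht)
  have hy_cont : ContinuousOn (fun t => (c t).2) (Set.Icc (0 : ℝ) 1) := fun t ht =>
    (hy t ht).continuousAt.continuousWithinAt
  have hne_snd : ∀ t ∈ Set.Icc (0 : ℝ) 1, (c' t).2 ≠ 0 := fun t ht =>
    Qform_snd_ne_zero hE (hne t ht) (hcausal t ht)
  have hsign : (∀ t ∈ Set.Icc (0 : ℝ) 1, (c' t).2 > 0) ∨
      (∀ t ∈ Set.Icc (0 : ℝ) 1, (c' t).2 < 0) :=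
    (hasDerivWithinAt_forall_lt_or_forall_gt_of_forall_ne (convex_Icc 0 1)
      (fun t ht => (hy t ht).hasDerivWithinAt) hne_snd).symm
  have hmono : StrictMonoOn (fun t => (c t).2) (Set.Icc (0 : ℝ) 1) ∨
      StrictAntiOn (fun t => (c t).2) (Set.Icc (0 : ℝ) 1) := by
    refine hsign.imp (fun hpos => ?_) (fun hneg => ?_)
    · refine strictMonoOn_of_deriv_pos (convex_Icc 0 1) hy_cont fun t ht => ?_
      rw [(hy t (interior_subset ht)).deriv]
      exact hpos t (interior_subset ht)
    · refine strictAntiOn_of_deriv_neg (convex_Icc 0 1) hy_cont fun t ht => ?_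
      rw [(hy t (interior_subset ht)).deriv]
      exact hneg t (interior_subset ht)
  refine ⟨hne_snd, hsign, hmono, ?_⟩
  rintro ⟨n, hn⟩
  have hclosed : (c 1).2 = (c 0).2 := sub_eq_zero.mp (congrArg Prod.snd hn)
  have hinj : Set.InjOn (fun t => (c t).2) (Set.Icc (0 : ℝ) 1) :=
    hmono.elim StrictMonoOn.injOn StrictAntiOn.injOn
  exact one_ne_zero (hinj (by simp) (by simp) hclosed)
end

section
/- Let E, F, G be real constants with F² + E·G > 0 and Q(u,v) = -E·u² + 2·F·u·v + G·v², and suppose E < 0. Realize the cylinder as (AddCircle (1:ℝ)) × ℝ with projection π : ℝ² → (AddCircle 1) × ℝ, π(x,y) = (x mod 1, y). Call a C¹ curve c : [0,1] → ℝ² future-directed causal if c' is continuous and nowhere vanishing, Q(c'(t)) ≤ 0 for all t, and (c'(t)).2 > 0 for all t. Fix p = (x₀,y₀) and q = (x₁,y₁) in ℝ² with y₀ ≤ y₁, and define the causal diamond D ⊆ (AddCircle 1) × ℝ as the set of points π(z), z ∈ ℝ², such that either z = p or there is a future-directed causal curve from p to z, and either z = q + (m,0) for some integer m or there is a future-directed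 causal curve from z to q + (m,0) for some integer m. Then D ⊆ π '' (ℝ × [y₀, y₁]) and the closure of D in (AddCircle 1) × ℝ is compact. (This is the compact-diamonds part of Theorem 2, (iv) ⇒ (vi): if ∂x is spacelike, the cylinder spacetime is globally hyperbolic.) -/
/-- The covering projection `π : ℝ² → (ℝ/ℤ) × ℝ` onto the cylinder. -/
noncomputable def cylProj (z : ℝ × ℝ) : AddCircle (1 : ℝ) × ℝ :=
  ((z.1 : AddCircle (1 : ℝ)), z.2)

/-- A future-directed causal C¹ curve in the plane: the derivative `c'` is continuous
and nowhere vanishing on `[0,1]`, everywhere non-spacelike, and has positive second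
component. -/
def FutureCausal (E F G : ℝ) (c : ℝ → ℝ × ℝ) : Prop :=
  ∃ c' : ℝ → ℝ × ℝ,
    (∀ t ∈ Set.Icc (0 : ℝ) 1, HasDerivAt c (c' t) t) ∧
    ContinuousOn c' (Set.Icc (0 : ℝ) 1) ∧
    (∀ t ∈ Set.Icc (0 : ℝ) 1, c' t ≠ 0) ∧
    (∀ t ∈ Set.Icc (0 : ℝ) 1, Qform E F G (c' t) ≤ 0) ∧
    (∀ t ∈ Set.Icc (0 : ℝ) 1, (c' t).2 > 0)

/-- The second coordinate strictly increases along a future-directed causal curve. -/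
theorem FutureCausal.snd_lt {E F G : ℝ} {c : ℝ → ℝ × ℝ} (hc : FutureCausal E F G c) :
    (c 0).2 < (c 1).2 := by
  obtain ⟨c', hderiv, -, -, -, hpos⟩ := hc
  have hsnd : ∀ t ∈ Set.Icc (0 : ℝ) 1, HasDerivAt (fun s => (c s).2) (c' t).2 t :=
    fun t ht => (hderiv t ht).snd
  have hmono : StrictMonoOn (fun s => (c s).2) (Set.Icc (0 : ℝ) 1) := by
    refine strictMonoOn_of_deriv_pos (convex_Icc 0 1)
      (fun t ht => (hsnd t ht).continuousAt.continuousWithinAt) fun t ht => ?_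
    rw [interior_Icc] at ht
    have ht' := Set.Ioo_subset_Icc_self ht
    rw [(hsnd t ht').deriv]
    exact hpos t ht'
  exact hmono (by simp) (by simp) one_pos

/-- A slab of the cylinder over a compact interval is compact. -/
theorem isCompact_cylProj_slab (a b : ℝ) :
    IsCompact (cylProj '' (Set.univ ×ˢ Set.Icc a b)) := by
  have himage : cylProj '' (Set.univ ×ˢ Set.Icc a b) = Set.univ ×ˢ Set.Icc a b := by
    ext ⟨θ, y⟩
    constructor
    · rintro ⟨z, hz, hzw⟩
      obtain ⟨-, rfl⟩ := Prod.ext_iff.mp hzw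
      exact ⟨Set.mem_univ _, hz.2⟩
    · rintro ⟨-, hy⟩
      obtain ⟨x, rfl⟩ := QuotientAddGroup.mk_surjective θ
      exact ⟨(x, y), ⟨Set.mem_univ _, hy⟩, rfl⟩
  have : Fact ((0 : ℝ) < 1) := ⟨one_pos⟩
  rw [himage]
  exact isCompact_univ.prod isCompact_Icc

/-- Compactness of causal diamonds (Theorem 2, (iv) ⇒ (vi)): if `E < 0`, the causal
diamond `J⁺(p) ∩ J⁻(q)` on the cylinder is contained in the compact slab
`S¹ × [y₀, y₁]`, and its closure is compact. -/
theorem stmt_9 (E F G : ℝ) (hLor : F ^ 2 + E * G > 0) (hE : E < 0)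
    (x₀ y₀ x₁ y₁ : ℝ) (hy : y₀ ≤ y₁)
    (D : Set (AddCircle (1 : ℝ) × ℝ))
    (hD : D = {w : AddCircle (1 : ℝ) × ℝ | ∃ z : ℝ × ℝ, w = cylProj z ∧
      (z = (x₀, y₀) ∨
        ∃ c : ℝ → ℝ × ℝ, FutureCausal E F G c ∧ c 0 = (x₀, y₀) ∧ c 1 = z) ∧
      ((∃ m : ℤ, z = (x₁ + (m : ℝ), y₁)) ∨
        ∃ m : ℤ, ∃ c : ℝ → ℝ × ℝ, FutureCausal E F G c ∧ c 0 = z ∧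
          c 1 = (x₁ + (m : ℝ), y₁))}) :
    D ⊆ cylProj '' (Set.univ ×ˢ Set.Icc y₀ y₁) ∧ IsCompact (closure D) := by
  have hsub : D ⊆ cylProj '' (Set.univ ×ˢ Set.Icc y₀ y₁) := by
    rw [hD]
    rintro w ⟨z, rfl, hpast, hfuture⟩
    refine ⟨z, ⟨Set.mem_univ _, ?_, ?_⟩, rfl⟩
    · rcases hpast with rfl | ⟨c, hc, h0, h1⟩
      · exact le_rfl
      · simpa [h0, h1] using hc.snd_lt.le
    · rcases hfuture with ⟨m, rfl⟩ | ⟨m, c, hc, h0, h1⟩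
      · exact le_rfl
      · simpa [h0, h1] using hc.snd_lt.le
  exact ⟨hsub, (isCompact_cylProj_slab y₀ y₁).closure_of_subset hsub⟩
end

section
/- Let E, F, G be real constants with F² + E·G > 0 and Q(u,v) = -E·u² + 2·F·u·v + G·v². Then E = 0 if and only if both of the following hold: (a) there exists a C¹ curve c : [0,1] → ℝ² with continuous nowhere-vanishing derivative, Q(c'(t)) ≤ 0 for all t, and c(1) - c(0) = (n,0) for some integer n (the flat Lorentzian cylinder is non-causal); and (b) there is no C¹ curve c : [0,1] → ℝ² with Q(c'(t)) < 0 for all t and c(1) - c(0) = (n,0) for some integer n (the flat Lorentzian cylinder is chronological). (This is Theorem 1: the fundamental vector field ∂x is lightlike if and only if the flat Lorentzian cylinder spacetime is chronological but non-causal.) -/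
/-- The flat Lorentzian cylinder admits a closed causal curve: a C¹ curve with
continuous nowhere-vanishing derivative, everywhere non-spacelike tangent, and
`c 1 - c 0 = (n, 0)` for some integer `n`. -/
def ExistsClosedCausal (E F G : ℝ) : Prop :=
  ∃ c c' : ℝ → ℝ × ℝ,
    (∀ t ∈ Set.Icc (0 : ℝ) 1, HasDerivAt c (c' t) t) ∧
    ContinuousOn c' (Set.Icc (0 : ℝ) 1) ∧
    (∀ t ∈ Set.Icc (0 : ℝ) 1, c' t ≠ 0) ∧
    (∀ t ∈ Set.Icc (0 : ℝ) 1, Qform E F G (c' t) ≤ 0) ∧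
    ∃ n : ℤ, c 1 - c 0 = ((n : ℝ), 0)

/-- The flat Lorentzian cylinder admits a closed timelike curve: a C¹ curve with
continuous derivative, everywhere timelike tangent, and `c 1 - c 0 = (n, 0)` for some
integer `n`. -/
def ExistsClosedTimelike (E F G : ℝ) : Prop :=
  ∃ c c' : ℝ → ℝ × ℝ,
    (∀ t ∈ Set.Icc (0 : ℝ) 1, HasDerivAt c (c' t) t) ∧
    ContinuousOn c' (Set.Icc (0 : ℝ) 1) ∧
    (∀ t ∈ Set.Icc (0 : ℝ) 1, Qform E F G (c' t) < 0) ∧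
    ∃ n : ℤ, c 1 - c 0 = ((n : ℝ), 0)

/-- The velocity of a curve whose endpoints have equal second coordinate is horizontal somewhere. -/
lemma exists_velocity_snd_eq_zero {c c' : ℝ → ℝ × ℝ} {a : ℝ}
    (hc : ∀ t ∈ Set.Icc (0 : ℝ) 1, HasDerivAt c (c' t) t) (hclosed : c 1 - c 0 = (a, 0)) :
    ∃ t ∈ Set.Icc (0 : ℝ) 1, (c' t).2 = 0 := by
  have hsnd : ∀ t ∈ Set.Icc (0 : ℝ) 1, HasDerivAt (fun s => (c s).2) (c' t).2 t :=
    fun t ht => (hc t ht).snd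
  have hends : (c 0).2 = (c 1).2 := (sub_eq_zero.mp (congrArg Prod.snd hclosed)).symm
  obtain ⟨t, ht, h⟩ := exists_hasDerivAt_eq_zero zero_lt_one
    (fun t ht => (hsnd t ht).continuousAt.continuousWithinAt) hends
    (fun t ht => hsnd t (Set.Ioo_subset_Icc_self ht))
  exact ⟨t, Set.Ioo_subset_Icc_self ht, h⟩

lemma Qform_of_snd_eq_zero (E F G : ℝ) {p : ℝ × ℝ} (hp : p.2 = 0) :
    Qform E F G p = -E * p.1 ^ 2 := by
  simp [Qform, hp]

/-- The orbit `t ↦ (t, 0)` of `∂x`. -/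
lemma hasDerivAt_horizontal (t : ℝ) :
    HasDerivAt (fun s : ℝ => (s, (0 : ℝ))) ((1 : ℝ), (0 : ℝ)) t :=
  (hasDerivAt_id t).prodMk (hasDerivAt_const t 0)

lemma existsClosedCausal_of_nonneg {E : ℝ} (F G : ℝ) (hE : 0 ≤ E) :
    ExistsClosedCausal E F G :=
  ⟨fun s => (s, 0), fun _ => (1, 0), fun t _ => hasDerivAt_horizontal t, continuousOn_const,
    fun _ _ => by simp, fun _ _ => by simpa [Qform] using hE, 1, by simp⟩

lemma existsClosedTimelike_of_pos {E : ℝ} (F G : ℝ) (hE : 0 < E) :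
    ExistsClosedTimelike E F G :=
  ⟨fun s => (s, 0), fun _ => (1, 0), fun t _ => hasDerivAt_horizontal t, continuousOn_const,
    fun _ _ => by simpa [Qform] using hE, 1, by simp⟩

lemma pos_of_existsClosedTimelike {E F G : ℝ} (h : ExistsClosedTimelike E F G) : 0 < E := by
  obtain ⟨c, c', hc, -, hQ, n, hn⟩ := h
  obtain ⟨t, ht, hv⟩ := exists_velocity_snd_eq_zero hc hn
  have hQt := hQ t ht
  rw [Qform_of_snd_eq_zero E F G hv] at hQt
  nlinarith [sq_nonneg (c' t).1]

lemma nonneg_of_existsClosedCausal {E F G : ℝ} (h : ExistsClosedCausal E F G) : 0 ≤ E := by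
  obtain ⟨c, c', hc, -, hne, hQ, n, hn⟩ := h
  obtain ⟨t, ht, hv⟩ := exists_velocity_snd_eq_zero hc hn
  have hu : 0 < (c' t).1 ^ 2 := sq_pos_of_ne_zero fun hu => hne t ht (Prod.ext hu hv)
  have hQt := hQ t ht
  rw [Qform_of_snd_eq_zero E F G hv] at hQt
  nlinarith

/-- Theorem 1: the fundamental vector field `∂x` is lightlike (`E = 0`) if and only if
the flat Lorentzian cylinder spacetime is chronological but non-causal. -/
theorem stmt_10 (E F G : ℝ) (hLor : F ^ 2 + E * G > 0) :
    E = 0 ↔ ExistsClosedCausal E F G ∧ ¬ ExistsClosedTimelike E F G := by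
  constructor
  · rintro rfl
    exact ⟨existsClosedCausal_of_nonneg F G le_rfl,
      fun h => lt_irrefl _ (pos_of_existsClosedTimelike h)⟩
  · rintro ⟨hcausal, hchron⟩
    exact le_antisymm (not_lt.mp fun hE => hchron (existsClosedTimelike_of_pos F G hE))
      (nonneg_of_existsClosedCausal hcausal)
end

section
/- Let E, F, G be real constants with F² + E·G > 0 and Q(u,v) = -E·u² + 2·F·u·v + G·v². Then the following are equivalent: (i) E > 0; (ii) there exists a C¹ curve c : [0,1] → ℝ² with Q(c'(t)) < 0 for all t and c(1) - c(0) = (n,0) for some integer n; (iii) for every (x₀,y₀) ∈ ℝ² there exists a C¹ curve c : [0,1] → ℝ² with c(0) = (x₀,y₀), Q(c'(t)) < 0 for all t, and c(1) - c(0) = (n,0) for some integer n. (This is the totally-vicious part of Theorem 2: ∂x is timelike iff the flat Lorentzian cylinder admits a closed timelike curve iff it is totally vicious.) -/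
/-- Theorem 2, totally-vicious part: `∂x` is timelike (`E > 0`) iff the flat Lorentzian
cylinder admits a closed timelike curve iff through every point there passes a closed
timelike curve. -/
theorem stmt_11 (E F G : ℝ) (hLor : F ^ 2 + E * G > 0) :
    List.TFAE [
      E > 0,
      ∃ c c' : ℝ → ℝ × ℝ,
        (∀ t ∈ Set.Icc (0 : ℝ) 1, HasDerivAt c (c' t) t) ∧
        ContinuousOn c' (Set.Icc (0 : ℝ) 1) ∧
        (∀ t ∈ Set.Icc (0 : ℝ) 1, Qform E F G (c' t) < 0) ∧
        (∃ n : ℤ, c 1 - c 0 = ((n : ℝ), 0)),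
      ∀ x₀ y₀ : ℝ, ∃ c c' : ℝ → ℝ × ℝ,
        c 0 = (x₀, y₀) ∧
        (∀ t ∈ Set.Icc (0 : ℝ) 1, HasDerivAt c (c' t) t) ∧
        ContinuousOn c' (Set.Icc (0 : ℝ) 1) ∧
        (∀ t ∈ Set.Icc (0 : ℝ) 1, Qform E F G (c' t) < 0) ∧
        (∃ n : ℤ, c 1 - c 0 = ((n : ℝ), 0))] := by
  tfae_have 1 → 3 := by
    intro hE x₀ y₀
    refine ⟨fun t => (x₀ + t, y₀), fun _ => (1, 0), by simp, fun t _ => ?_,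
      continuousOn_const, fun _ _ => by simpa [Qform] using hE, 1, by simp⟩
    exact ((hasDerivAt_id t).const_add x₀).prodMk (hasDerivAt_const t y₀)
  tfae_have 3 → 2 := by
    intro h
    obtain ⟨c, c', -, hc⟩ := h 0 0
    exact ⟨c, c', hc⟩
  tfae_have 2 → 1 := by
    rintro ⟨c, c', hderiv, -, hQ, n, hn⟩
    -- By Rolle's theorem the velocity is somewhere a multiple of `∂x`.
    have hsnd : ∀ t ∈ Set.Icc (0 : ℝ) 1, HasDerivAt (fun s => (c s).2) (c' t).2 t :=
      fun t ht => (hasFDerivAt_snd (p := c t)).comp_hasDerivAt t (hderiv t ht)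
    have hends : (c 0).2 = (c 1).2 := by
      have h : (c 1).2 - (c 0).2 = 0 := congrArg Prod.snd hn
      linarith
    obtain ⟨t, ht, hvel⟩ := exists_hasDerivAt_eq_zero zero_lt_one
      (fun t ht => (hsnd t ht).continuousAt.continuousWithinAt) hends
      (fun t ht => hsnd t (Set.Ioo_subset_Icc_self ht))
    have hneg := hQ t (Set.Ioo_subset_Icc_self ht)
    simp only [Qform, hvel] at hneg
    by_contra! hE
    nlinarith [mul_nonneg (neg_nonneg.mpr hE) (sq_nonneg (c' t).1)]
  tfae_finish
end
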